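/- arXiv:2303.02089 — 2 statements merged into one kernel-verified Lean document; each statement's English description precedes it below -/
import Mathlib

section
/- Let Γ ⊆ Ind_Ω A be a linear subspace such that (a) for every continuous function γ : Ω/H → ℂ vanishing at infinity and every ξ ∈ Γ, the function ω ↦ γ(q(ω)) ξ(ω) belongs to Γ, and (b) for every ω ∈ Ω the set {ξ(ω) : ξ ∈ Γ} is dense in A. Then Γ is dense in Ind_Ω A. -/
/-!
The orbit space `Ω/H` is a locally compact Hausdorff space: the quotient map is open, and the
orbit relation is closed, being the range of the proper map `(ω, h) ↦ (ω • h, ω)`. Hence compact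
subsets of `Ω/H` admit finite partitions of unity by compactly supported functions.

Given `ξ ∈ Ind_Ω A` and `ε > 0`, let `K ⊆ Ω/H` be compact with `‖ξ‖ < ε` away from `K`. Density of
the values of `Γ` provides, for each `ω`, some `η ∈ Γ` with `‖η ω - ξ ω‖ < ε`. The set where
`‖η - ξ‖ < ε` is open and `H`-invariant (the action on `A` is isometric), so it descends to an open
subset of `Ω/H`. Finitely many of these sets cover `K`; with a subordinate partition of unity `fᵢ`,
where `∑ fᵢ = 1` on `K` and `∑ fᵢ ≤ 1` everywhere, the element `∑ fᵢ ηᵢ` of `Γ` satisfies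
`‖ξ - ∑ fᵢ ηᵢ‖ ≤ ∑ fᵢ ‖ξ - ηᵢ‖ + (1 - ∑ fᵢ) ‖ξ‖ ≤ ε` pointwise.
-/

open scoped BoundedContinuousFunction ZeroAtInfty

/-- The orbit relation of a right action `act : Ω → H → Ω`:
`ω ~ ω'` iff `ω' = ω • h` for some `h ∈ H`.  The orbit space `Ω/H` is `Quot (orbitRel act)`,
equipped with the quotient topology, and the quotient map is `Quot.mk (orbitRel act)`. -/
def orbitRel {Ω H : Type*} (act : Ω → H → Ω) : Ω → Ω → Prop :=
  fun ω ω' => ∃ h : H, act ω h = ω'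

/-- `act : Ω → H → Ω` is a continuous, free and proper right action of the discrete group `H`
on the space `Ω`. -/
structure IsFreeProperAction {Ω H : Type*} [TopologicalSpace Ω] [TopologicalSpace H] [Group H]
    (act : Ω → H → Ω) : Prop where
  act_one : ∀ ω, act ω 1 = ω
  act_mul : ∀ ω (h h' : H), act (act ω h) h' = act ω (h * h')
  continuous : Continuous fun p : Ω × H => act p.1 p.2
  free : ∀ ω (h : H), act ω h = ω → h = 1
  proper : IsProperMap fun p : Ω × H => (act p.1 p.2, p.1)

/-- `π : H → A → A` is a left action of the group `H` on the normed space `A` by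
complex-linear isometric isomorphisms. -/
structure IsIsometricAction {H A : Type*} [Group H] [NormedAddCommGroup A] [NormedSpace ℂ A]
    (π : H → A → A) : Prop where
  act_one : ∀ a, π 1 a = a
  act_mul : ∀ (h h' : H) a, π (h * h') a = π h (π h' a)
  map_add : ∀ (h : H) (a b : A), π h (a + b) = π h a + π h b
  map_smul : ∀ (h : H) (c : ℂ) (a : A), π h (c • a) = c • π h a
  norm_map : ∀ (h : H) (a : A), ‖π h a‖ = ‖a‖

/-- The induced Banach space `Ind_Ω A` of an étale correspondence, specialized to a discrete
group `H`: the set of bounded continuous functions `ξ : Ω → A` that are `H`-equivariant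
(`ξ (ω • h) = h⁻¹ • ξ ω`) and whose norm function vanishes at infinity relative to the orbit
space `Ω/H`.  It is regarded as a subset of the Banach space `Ω →ᵇ A` of bounded continuous
functions with the supremum norm. -/
def IndSet {H Ω A : Type*} [Group H] [TopologicalSpace Ω] [NormedAddCommGroup A]
    (act : Ω → H → Ω) (π : H → A → A) : Set (Ω →ᵇ A) :=
  {ξ | (∀ ω (h : H), ξ (act ω h) = π h⁻¹ (ξ ω)) ∧
    ∀ ε : ℝ, 0 < ε → ∃ K : Set (Quot (orbitRel act)), IsCompact K ∧
      ∀ ω, Quot.mk (orbitRel act) ω ∉ K → ‖ξ ω‖ < ε}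

theorem orbitRel_equivalence {Ω H : Type*} [TopologicalSpace Ω] [TopologicalSpace H] [Group H]
    {act : Ω → H → Ω} (hact : IsFreeProperAction act) : Equivalence (orbitRel act) where
  refl ω := ⟨1, hact.act_one ω⟩
  symm := by
    rintro ω _ ⟨h, rfl⟩
    exact ⟨h⁻¹, by rw [hact.act_mul, mul_inv_cancel, hact.act_one]⟩
  trans := by
    rintro ω _ _ ⟨h, rfl⟩ ⟨h', rfl⟩
    exact ⟨h * h', (hact.act_mul ω h h').symm⟩

theorem mk_eq_mk_iff {Ω H : Type*} [TopologicalSpace Ω] [TopologicalSpace H] [Group H]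
    {act : Ω → H → Ω} (hact : IsFreeProperAction act) {ω ω' : Ω} :
    Quot.mk (orbitRel act) ω = Quot.mk (orbitRel act) ω' ↔ ∃ h : H, act ω h = ω' := by
  rw [Quot.eq, (orbitRel_equivalence hact).eqvGen_iff]
  rfl

theorem isOpenQuotientMap_mk {Ω H : Type*} [TopologicalSpace Ω] [TopologicalSpace H] [Group H]
    {act : Ω → H → Ω} (hact : IsFreeProperAction act) :
    IsOpenQuotientMap (Quot.mk (orbitRel act)) where
  surjective := Quot.mk_surjective
  continuous := continuous_quot_mk
  isOpenMap U hU := by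
    -- The saturation of `U` is the union of the preimages of `U` under the maps `ω ↦ ω • h`.
    have hsat : Quot.mk (orbitRel act) ⁻¹' (Quot.mk (orbitRel act) '' U)
        = ⋃ h : H, (fun ω => act ω h) ⁻¹' U := by
      ext ω
      simp only [Set.mem_preimage, Set.mem_image, Set.mem_iUnion]
      constructor
      · rintro ⟨ω', hω', he⟩
        obtain ⟨h, rfl⟩ := (mk_eq_mk_iff hact).1 he.symm
        exact ⟨h, hω'⟩
      · rintro ⟨h, hh⟩
        exact ⟨_, hh, ((mk_eq_mk_iff hact).2 ⟨h, rfl⟩).symm⟩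
    rw [← isQuotientMap_quot_mk.isOpen_preimage, hsat]
    exact isOpen_iUnion fun h =>
      hU.preimage (hact.continuous.comp (continuous_id.prodMk continuous_const))

theorem t2Space_orbitSpace {Ω H : Type*} [TopologicalSpace Ω] [TopologicalSpace H] [Group H]
    {act : Ω → H → Ω} (hact : IsFreeProperAction act) : T2Space (Quot (orbitRel act)) := by
  rw [t2Space_iff_of_isOpenQuotientMap (isOpenQuotientMap_mk hact)]
  convert hact.proper.isClosedMap.isClosed_range using 1
  ext ⟨a, b⟩
  simp only [Set.mem_ofPred_eq, Set.mem_range, Prod.mk.injEq, Prod.exists]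
  rw [eq_comm, mk_eq_mk_iff hact]
  constructor
  · rintro ⟨h, hh⟩
    exact ⟨b, h, hh, rfl⟩
  · rintro ⟨_, h, hh, rfl⟩
    exact ⟨h, hh⟩

/-- The distance between two equivariant functions is constant on orbits. -/
theorem norm_sub_act {H Ω A : Type*} [Group H] [TopologicalSpace Ω] [NormedAddCommGroup A]
    [NormedSpace ℂ A] {act : Ω → H → Ω} {π : H → A → A} (hπ : IsIsometricAction π)
    {ξ η : Ω →ᵇ A} (hξ : ξ ∈ IndSet act π) (hη : η ∈ IndSet act π) (ω : Ω) (h : H) :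
    ‖η (act ω h) - ξ (act ω h)‖ = ‖η ω - ξ ω‖ := by
  have hsub : π h⁻¹ (η ω - ξ ω) = π h⁻¹ (η ω) - π h⁻¹ (ξ ω) := by
    rw [sub_eq_add_neg, ← neg_one_smul ℂ (ξ ω), hπ.map_add, hπ.map_smul, neg_one_smul,
      sub_eq_add_neg]
  rw [hξ.1, hη.1, ← hsub, hπ.norm_map]

/-- A partial convex combination of points within `ε` of `x`, whose missing weight is only
allowed when `x` itself is within `ε` of `0`, is within `ε` of `x`. -/
theorem norm_sub_sum_smul_le {ι A : Type*} [Fintype ι] [NormedAddCommGroup A] [NormedSpace ℂ A]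
    {ε : ℝ} (x : A) (a : ι → A) (f : ι → ℝ) (hf : ∀ i, 0 ≤ f i) (hf1 : ∑ i, f i ≤ 1)
    (ha : ∀ i, f i ≠ 0 → ‖a i - x‖ ≤ ε) (hx : ∑ i, f i ≠ 1 → ‖x‖ ≤ ε) :
    ‖x - ∑ i, (f i : ℂ) • a i‖ ≤ ε := by
  have hdecomp : x - ∑ i, (f i : ℂ) • a i
      = ((1 - ∑ i, f i : ℝ) : ℂ) • x - ∑ i, (f i : ℂ) • (a i - x) := by
    simp only [smul_sub, Finset.sum_sub_distrib, ← Finset.sum_smul]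
    push_cast
    rw [sub_smul, one_smul]
    abel
  have h1 : ‖((1 - ∑ i, f i : ℝ) : ℂ) • x‖ ≤ (1 - ∑ i, f i) * ε := by
    rw [norm_smul, Complex.norm_real, Real.norm_of_nonneg (sub_nonneg.2 hf1)]
    by_cases hs : ∑ i, f i = 1
    · simp [hs]
    · exact mul_le_mul_of_nonneg_left (hx hs) (sub_nonneg.2 hf1)
  have h2 : ‖∑ i, (f i : ℂ) • (a i - x)‖ ≤ (∑ i, f i) * ε := by
    rw [Finset.sum_mul]
    refine norm_sum_le_of_le _ fun i _ => ?_
    rw [norm_smul, Complex.norm_real, Real.norm_of_nonneg (hf i)]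
    by_cases hi : f i = 0
    · simp [hi]
    · exact mul_le_mul_of_nonneg_left (ha i hi) (hf i)
  rw [hdecomp]
  linarith [norm_sub_le (((1 - ∑ i, f i : ℝ) : ℂ) • x) (∑ i, (f i : ℂ) • (a i - x))]

/-- **Density criterion.**  Let `Γ ⊆ Ind_Ω A` be a linear subspace such that
(a) `Γ` is closed under multiplication by functions in `C₀(Ω/H)`, and
(b) for every `ω ∈ Ω` the set of values `{ξ(ω) : ξ ∈ Γ}` is dense in `A`.
Then `Γ` is dense in `Ind_Ω A`. -/
theorem indSet_density_criterion
    {H : Type*} [Group H] [TopologicalSpace H] [DiscreteTopology H]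
    {Ω : Type*} [TopologicalSpace Ω] [LocallyCompactSpace Ω] [T2Space Ω]
    {A : Type*} [NormedAddCommGroup A] [NormedSpace ℂ A] [CompleteSpace A]
    (act : Ω → H → Ω) (hact : IsFreeProperAction act)
    (π : H → A → A) (hπ : IsIsometricAction π)
    (Γ : Set (Ω →ᵇ A)) (hΓsub : Γ ⊆ IndSet act π)
    (hΓzero : (0 : Ω →ᵇ A) ∈ Γ)
    (hΓadd : ∀ ξ η : Ω →ᵇ A, ξ ∈ Γ → η ∈ Γ → ξ + η ∈ Γ)
    (hΓsmul : ∀ (c : ℂ) (ξ : Ω →ᵇ A), ξ ∈ Γ → c • ξ ∈ Γ)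
    (hΓmod : ∀ (γ : C₀(Quot (orbitRel act), ℂ)) (ξ : Ω →ᵇ A), ξ ∈ Γ →
      ∃ ζ ∈ Γ, ∀ ω, ζ ω = γ (Quot.mk (orbitRel act) ω) • ξ ω)
    (hΓdense : ∀ ω : Ω, Dense {a : A | ∃ ξ ∈ Γ, ξ ω = a}) :
    IndSet act π ⊆ closure Γ := by
  intro ξ hξ
  rw [Metric.mem_closure_iff]
  intro δ hδ
  obtain ⟨ε, hε, hεδ⟩ := exists_between hδ
  have hq := isOpenQuotientMap_mk hact
  have := t2Space_orbitSpace hact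
  have := hq.locallyCompactSpace
  obtain ⟨K, hK, hKξ⟩ := hξ.2 ε hε
  have happrox : ∀ ω : Ω, ∃ η ∈ Γ, ‖η ω - ξ ω‖ < ε := by
    intro ω
    obtain ⟨_, hd, ⟨η, hη, rfl⟩⟩ := Metric.dense_iff.1 (hΓdense ω) (ξ ω) ε hε
    exact ⟨η, hη, by simpa [dist_eq_norm] using hd⟩
  choose η hηΓ hηξ using happrox
  let U : Ω → Set (Quot (orbitRel act)) := fun ω₀ =>
    Quot.mk (orbitRel act) '' {ω | ‖η ω₀ ω - ξ ω‖ < ε}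
  have hUopen : ∀ ω₀, IsOpen (U ω₀) := fun ω₀ =>
    hq.isOpenMap _ (isOpen_lt (by fun_prop) continuous_const)
  have hU : ∀ ω₀ ω, Quot.mk (orbitRel act) ω ∈ U ω₀ → ‖η ω₀ ω - ξ ω‖ < ε := by
    rintro ω₀ ω ⟨ω', hω', he⟩
    obtain ⟨h, rfl⟩ := (mk_eq_mk_iff hact).1 he
    rw [norm_sub_act hπ hξ (hΓsub (hηΓ ω₀))]
    exact hω'
  obtain ⟨t, ht⟩ := hK.elim_finite_subcover U hUopen (by
    rintro ⟨ω⟩ -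
    exact Set.mem_iUnion.2 ⟨ω, ω, hηξ ω, rfl⟩)
  obtain ⟨f, hfsub, hfcp⟩ := PartitionOfUnity.exists_isSubordinate_of_locallyFinite_t2space hK
    (fun i : t => U i) (fun i => hUopen i) (locallyFinite_of_finite _)
    (by simpa [Set.iUnion_subtype] using ht)
  let γ : t → C₀(Quot (orbitRel act), ℂ) := fun i =>
    { toFun := fun x => (f i x : ℂ)
      continuous_toFun := by fun_prop
      zero_at_infty' := by
        refine HasCompactSupport.is_zero_at_infty ?_
        exact (hfcp i).comp_left (g := fun r : ℝ => (r : ℂ)) Complex.ofReal_zero }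
  choose ζ hζΓ hζ using fun i : t => hΓmod (γ i) (η i) (hηΓ i)
  let S : AddSubmonoid (Ω →ᵇ A) :=
    { carrier := Γ
      zero_mem' := hΓzero
      add_mem' := fun {a b} ha hb => hΓadd a b ha hb }
  have hsum : ∑ i, ζ i ∈ S := sum_mem fun i _ => hζΓ i
  refine ⟨∑ i, ζ i, hsum, lt_of_le_of_lt ?_ hεδ⟩
  rw [BoundedContinuousFunction.dist_le hε.le]
  intro ω
  have hval : (∑ i, ζ i) ω = ∑ i, (f i (Quot.mk (orbitRel act) ω) : ℂ) • η i ω := by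
    rw [BoundedContinuousFunction.sum_apply]
    exact Finset.sum_congr rfl fun i _ => hζ i ω
  rw [dist_eq_norm, hval]
  refine norm_sub_sum_smul_le (ξ ω) (fun i : t => η i ω) _ (fun i => f.nonneg i _) ?_ ?_ ?_
  · simpa [finsum_eq_sum_of_fintype] using f.sum_le_one (Quot.mk (orbitRel act) ω)
  · intro i hi
    exact (hU i ω (hfsub i (subset_tsupport _ hi))).le
  · intro hne
    refine (hKξ ω fun hmem => hne ?_).le
    simpa [finsum_eq_sum_of_fintype] using f.sum_eq_one hmem
end

section
/- Fix x ∈ X and let Ω_x = ρ⁻¹(x), an H-invariant closed subset of Ω, with orbit space Ω_x/H. Consider the restriction map R : Ind_Ω A → C_b(Ω_x, A), ξ ↦ ξ|_{Ω_x}, into the bounded continuous functions on Ω_x. Then: (i) the kernel of R equals the closed linear span of the functions ω ↦ δ(ρ(ω)) ξ(ω), where δ ranges over continuous functions X → ℂ vanishing at infinity with δ(x) = 0 and ξ ranges over Ind_Ω A; (ii) the image of R is exactly the set of bounded continuous functions η : Ω_x → A such that η(ω • h) = h⁻¹ • η(ω) for all ω ∈ Ω_x and h ∈ H, and such that for every ε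 > 0 there is a compact set K ⊆ Ω_x/H with ‖η(ω)‖ < ε whenever the H-orbit of ω lies outside K. -/
/-! The restriction map `R` from `Ind_Ω A` to functions on the fibre `Ω_x` is handled with three
ideas.

* The orbit map is open and `Ω` is locally compact, so every compact subset of `Ω/H` is covered by
  the image of a compact subset of `Ω`. Vanishing at infinity relative to `Ω/H` can therefore be
  tested with compact sets `L ⊆ Ω`: the norm is small on every orbit that misses `L`
  (`exists_compact_quot_iff`). The same holds for the closed subset `Ω_x`, and the target set in
  the description of the image is `IndSet` for the restricted action `fibreAct`
  (`fibre_set_eq`).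
* Kernel: if `ξ ∈ Ind_Ω A` vanishes on `Ω_x`, the points of a suitable compact set at which
  `‖ξ‖ ≥ ε` map under `ρ` to a compact subset of `X` missing `x`. If `δ` is a bump function equal to
  `1` there and to `0` at `x`, then `(δ ∘ ρ) ξ` is within `ε` of `ξ`.
* Image: given `g` in the target, a finite sum of bump functions times constants produces `φ ≥ 0`
  and `F : Ω → A`, compactly supported, with `F ≈ φ g` on `Ω_x` relative to `φ`, and `φ ≥ 1` on a
  prescribed compact set (`exists_local_approx`). By properness the averages
  `E F (ω) = ∑ h, h • F (ω • h)` and `E φ (ω) = ∑ h, φ (ω • h)` are locally finite sums, and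
  `E F / max 1 (E φ)` is an element of `Ind_Ω A` of norm at most `‖g‖` whose restriction is
  uniformly close to `g` (`exists_approx_lift`). Summing the successive approximations of the
  remainders (`exists_preimage_of_approx`) gives an exact preimage, because `Ind_Ω A` is complete.
-/

open scoped BoundedContinuousFunction ZeroAtInfty

/-! ### Compact sets of orbits -/

/-- The orbit map is open, so it admits compact lifts of compact sets when `Y` is locally compact:
a property holding off a compact set of orbits is the same as a property holding on the orbits
that miss a compact subset of `Y`. -/
lemma exists_compact_quot_iff {Y H : Type*} [Group H] [TopologicalSpace Y] [LocallyCompactSpace Y]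
    {act : Y → H → Y} (h1 : ∀ y, act y 1 = y)
    (hm : ∀ y (h h' : H), act (act y h) h' = act y (h * h'))
    (hc : ∀ h, Continuous fun y => act y h) (P : Y → Prop) :
    (∃ K : Set (Quot (orbitRel act)), IsCompact K ∧
      ∀ y, Quot.mk (orbitRel act) y ∉ K → P y) ↔
    ∃ L : Set Y, IsCompact L ∧ ∀ y, (∀ h, act y h ∉ L) → P y := by
  have heqv : ∀ y y', Quot.mk (orbitRel act) y = Quot.mk (orbitRel act) y' →
      ∃ h, act y h = y' := by
    intro y y' hyy
    have hE : Equivalence (orbitRel act) :=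
      ⟨fun y => ⟨1, h1 y⟩,
       fun {y z} ⟨h, hh⟩ => ⟨h⁻¹, by rw [← hh, hm, mul_inv_cancel, h1]⟩,
       fun {y z w} ⟨h, hh⟩ ⟨k, hk⟩ => ⟨h * k, by rw [← hm, hh, hk]⟩⟩
    exact (hE.eqvGen_iff).1 (Quot.eqvGen_exact hyy)
  have hopen : IsOpenMap (Quot.mk (orbitRel act)) := by
    intro U hU
    have : Quot.mk (orbitRel act) ⁻¹' (Quot.mk (orbitRel act) '' U) =
        ⋃ h, (fun y => act y h) ⁻¹' U := by
      ext y
      simp only [Set.mem_preimage, Set.mem_image, Set.mem_iUnion]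
      constructor
      · rintro ⟨z, hz, hzy⟩
        obtain ⟨h, hh⟩ := heqv _ _ hzy.symm
        exact ⟨h, by rwa [hh]⟩
      · rintro ⟨h, hh⟩
        exact ⟨_, hh, (Quot.sound ⟨h, rfl⟩).symm⟩
    rw [← isQuotientMap_quot_mk.isOpen_preimage, this]
    exact isOpen_iUnion fun h => hU.preimage (hc h)
  constructor
  · rintro ⟨K, hK, hP⟩
    obtain ⟨L, hL, hKL⟩ : ∃ L : Set Y, IsCompact L ∧ K ⊆ Quot.mk (orbitRel act) '' L := by
      refine hK.induction_on (p := fun K => ∃ L : Set Y, IsCompact L ∧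
        K ⊆ Quot.mk (orbitRel act) '' L) ⟨∅, isCompact_empty, by simp⟩ ?_ ?_ ?_
      · rintro s t hst ⟨L, hL, h⟩
        exact ⟨L, hL, hst.trans h⟩
      · rintro s t ⟨L, hL, h⟩ ⟨L', hL', h'⟩
        exact ⟨L ∪ L', hL.union hL', by
          rw [Set.image_union]; exact Set.union_subset_union h h'⟩
      · rintro z -
        obtain ⟨y, rfl⟩ := Quot.exists_rep z
        obtain ⟨N, hN, hyN⟩ := exists_compact_mem_nhds y
        exact ⟨_, mem_nhdsWithin_of_mem_nhds (hopen.image_mem_nhds hyN), N, hN, subset_rfl⟩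
    refine ⟨L, hL, fun y hy => hP y fun hyK => ?_⟩
    obtain ⟨z, hz, hzy⟩ := hKL hyK
    obtain ⟨h, hh⟩ := heqv _ _ hzy.symm
    exact hy h (by rwa [hh])
  · rintro ⟨L, hL, hP⟩
    refine ⟨_, hL.image continuous_quot_mk, fun y hy => hP y fun h hh => hy ?_⟩
    exact ⟨_, hh, (Quot.sound ⟨h, rfl⟩).symm⟩

/-! ### The induced space as a closed subspace -/

section Ind

variable {H Y A : Type*} [Group H] [TopologicalSpace Y] [NormedAddCommGroup A] [NormedSpace ℂ A]
  {act : Y → H → Y} {π : H → A → A}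

lemma IsIsometricAction.map_zero (hπ : IsIsometricAction π) (h : H) : π h 0 = 0 := by
  simpa using hπ.map_smul h 0 0

lemma IsIsometricAction.map_sub (hπ : IsIsometricAction π) (h : H) (a b : A) :
    π h (a - b) = π h a - π h b := by
  have h1 := hπ.map_smul h (-1) b
  rw [neg_one_smul, neg_one_smul] at h1
  rw [sub_eq_add_neg, hπ.map_add, h1, sub_eq_add_neg]

lemma IsIsometricAction.continuous (hπ : IsIsometricAction π) (h : H) : Continuous (π h) := by
  refine (Isometry.of_dist_eq fun a b => ?_).continuous
  rw [dist_eq_norm, ← hπ.map_sub, hπ.norm_map, dist_eq_norm]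

lemma indSet_norm_act (hπ : IsIsometricAction π) {ξ : Y →ᵇ A} (hξ : ξ ∈ IndSet act π)
    (ω : Y) (h : H) : ‖ξ (act ω h)‖ = ‖ξ ω‖ := by
  rw [hξ.1, hπ.norm_map]

/-- `IndSet` is stable under multiplication by invariant bounded functions. -/
lemma indSet_of_smul (hπ : IsIsometricAction π) {ξ ζ : Y →ᵇ A} (hξ : ξ ∈ IndSet act π)
    (c : Y → ℂ) (C : ℝ) (hC : ∀ ω, ‖c ω‖ ≤ C) (hc : ∀ ω h, c (act ω h) = c ω)
    (hζ : ∀ ω, ζ ω = c ω • ξ ω) : ζ ∈ IndSet act π := by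
  refine ⟨fun ω h => by rw [hζ, hζ, hc, hξ.1, hπ.map_smul], fun ε hε => ?_⟩
  have hC0 : 0 < |C| + 1 := by positivity
  obtain ⟨K, hK, h⟩ := hξ.2 (ε / (|C| + 1)) (by positivity)
  refine ⟨K, hK, fun ω hω => ?_⟩
  have h2 := h ω hω
  rw [lt_div_iff₀ hC0] at h2
  rw [hζ, norm_smul]
  have h3 : ‖c ω‖ ≤ |C| + 1 := (hC ω).trans ((le_abs_self C).trans (by linarith))
  nlinarith [norm_nonneg (ξ ω)]

/-- `Ind_Ω A` as a linear subspace of the bounded continuous functions. -/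
def indSubmodule (act : Y → H → Y) (hπ : IsIsometricAction π) : Submodule ℂ (Y →ᵇ A) where
  carrier := IndSet act π
  zero_mem' := ⟨fun ω h => by simp [hπ.map_zero], fun ε hε =>
    ⟨∅, isCompact_empty, fun ω _ => by simpa using hε⟩⟩
  add_mem' := by
    rintro ξ η hξ hη
    refine ⟨fun ω h => by simp [hξ.1, hη.1, hπ.map_add], fun ε hε => ?_⟩
    obtain ⟨K, hK, h⟩ := hξ.2 (ε / 2) (by positivity)
    obtain ⟨K', hK', h'⟩ := hη.2 (ε / 2) (by positivity)
    refine ⟨K ∪ K', hK.union hK', fun ω hω => ?_⟩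
    rw [Set.mem_union, not_or] at hω
    have := norm_add_le (ξ ω) (η ω)
    have h1 := h ω hω.1
    have h2 := h' ω hω.2
    simp only [BoundedContinuousFunction.coe_add, Pi.add_apply]
    linarith
  smul_mem' := by
    intro c ξ hξ
    exact indSet_of_smul hπ hξ (fun _ => c) ‖c‖ (fun _ => le_rfl) (fun _ _ => rfl)
      (fun ω => rfl)

lemma isClosed_indSet (act : Y → H → Y) (hπ : IsIsometricAction π) :
    IsClosed (IndSet act π) := by
  refine isClosed_of_closure_subset fun ξ hξ => ⟨fun ω h => ?_, fun ε hε => ?_⟩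
  · have hcl : IsClosed {ξ : Y →ᵇ A | ξ (act ω h) = π h⁻¹ (ξ ω)} :=
      isClosed_eq (continuous_eval_const _)
        ((hπ.continuous _).comp (continuous_eval_const ω))
    exact closure_minimal (fun η hη => hη.1 ω h) hcl hξ
  · obtain ⟨η, hη, hd⟩ := Metric.mem_closure_iff.1 hξ (ε / 2) (by positivity)
    obtain ⟨K, hK, h⟩ := hη.2 (ε / 2) (by positivity)
    refine ⟨K, hK, fun ω hω => ?_⟩
    have h1 := h ω hω
    have h2 := BoundedContinuousFunction.dist_coe_le_dist (f := ξ) (g := η) ω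
    rw [dist_eq_norm] at h2
    have h3 := norm_add_le (ξ ω - η ω) (η ω)
    rw [sub_add_cancel] at h3
    linarith

omit [NormedSpace ℂ A] in
lemma mem_indSet_iff [LocallyCompactSpace Y] (h1 : ∀ y, act y 1 = y)
    (hm : ∀ y (h h' : H), act (act y h) h' = act y (h * h'))
    (hc : ∀ h, Continuous fun y => act y h) (ξ : Y →ᵇ A) :
    ξ ∈ IndSet act π ↔ (∀ ω (h : H), ξ (act ω h) = π h⁻¹ (ξ ω)) ∧
      ∀ ε : ℝ, 0 < ε → ∃ L : Set Y, IsCompact L ∧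
        ∀ ω, (∀ h, act ω h ∉ L) → ‖ξ ω‖ < ε :=
  and_congr_right fun _ => forall₂_congr fun ε _ =>
    exists_compact_quot_iff h1 hm hc fun ω => ‖ξ ω‖ < ε

end Ind

/-! ### Successive and local approximation -/

/-- If every `g ∈ G` is approximated, within half its norm, by the image of some `ξ ∈ I` with
`‖ξ‖ ≤ ‖g‖`, and the remainder lies in `G`, then `G` is contained in the image of the closed
subspace `I`: the approximations of the successive remainders form an absolutely convergent
series. -/
lemma exists_preimage_of_approx {E F : Type*} [NormedAddCommGroup E] [NormedSpace ℂ E]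
    [CompleteSpace E] [NormedAddCommGroup F] [NormedSpace ℂ F] (R : E →L[ℂ] F)
    (I : Submodule ℂ E) (hI : IsClosed (I : Set E)) (G : Set F)
    (h : ∀ g ∈ G, ∃ ξ ∈ I, ‖ξ‖ ≤ ‖g‖ ∧ g - R ξ ∈ G ∧ ‖g - R ξ‖ ≤ ‖g‖ / 2) :
    ∀ g ∈ G, ∃ ξ ∈ I, R ξ = g := by
  intro g hg
  choose! Ξ hΞI hΞn hΞG hΞ using h
  let u : ℕ → F := fun n => (fun f => f - R (Ξ f))^[n] g
  have hu : ∀ n, u (n + 1) = u n - R (Ξ (u n)) := fun n => Function.iterate_succ_apply' _ _ _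
  have huG : ∀ n, u n ∈ G := by
    intro n
    induction n with
    | zero => exact hg
    | succ n ih => rw [hu]; exact hΞG _ ih
  have hun : ∀ n, ‖u n‖ ≤ ‖g‖ * (1 / 2) ^ n := by
    intro n
    induction n with
    | zero => simp [u]
    | succ n ih =>
      rw [hu, pow_succ]
      have := hΞ _ (huG n)
      linarith
  have hgeo : Summable fun n : ℕ => ‖g‖ * (1 / 2 : ℝ) ^ n :=
    (summable_geometric_of_lt_one (by norm_num) (by norm_num)).mul_left _
  have hs : Summable fun n => Ξ (u n) :=
    Summable.of_norm_bounded hgeo fun n => (hΞn _ (huG n)).trans (hun n)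
  have hpart : ∀ n, ∑ i ∈ Finset.range n, R (Ξ (u i)) = g - u n := by
    intro n
    induction n with
    | zero => simp [u]
    | succ n ih => rw [Finset.sum_range_succ, ih, hu]; abel
  refine ⟨∑' n, Ξ (u n), ?_, ?_⟩
  · exact hI.mem_of_tendsto hs.hasSum.tendsto_sum_nat
      (Filter.Eventually.of_forall fun n => I.sum_mem fun i _ => hΞI _ (huG i))
  · have t1 := (R.hasSum hs.hasSum).tendsto_sum_nat
    simp only [hpart] at t1
    have t2 : Filter.Tendsto u Filter.atTop (nhds 0) :=
      squeeze_zero_norm hun hgeo.tendsto_atTop_zero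
    exact tendsto_nhds_unique t1 (by simpa using t2.const_sub g)

/-- A bounded continuous function `g` on a fibre of `ρ` is approximated near a compact
set `L` by `F / φ`, where `F` and `φ` are continuous with compact support on all of `Ω`, obtained by
gluing constants with bump functions. -/
lemma exists_local_approx {Ω A X : Type*} [TopologicalSpace Ω] [LocallyCompactSpace Ω] [T2Space Ω]
    [NormedAddCommGroup A] [NormedSpace ℂ A] [TopologicalSpace X]
    (ρ : Ω → X) (x : X) (g : {ω : Ω // ρ ω = x} →ᵇ A) {ε : ℝ} (hε : 0 < ε)
    {L : Set {ω : Ω // ρ ω = x}} (hL : IsCompact L) :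
    ∃ (φ : Ω → ℝ) (F : Ω → A) (T : Set Ω), Continuous φ ∧ Continuous F ∧ IsCompact T ∧
      (∀ ω, 0 ≤ φ ω) ∧ (∀ ω, ω ∉ T → φ ω = 0) ∧ (∀ ω, ‖F ω‖ ≤ ‖g‖ * φ ω) ∧
      (∀ ω ∈ L, 1 ≤ φ ω) ∧
      ∀ ω : {ω : Ω // ρ ω = x}, ‖F ω - (φ ω : ℂ) • g ω‖ ≤ ε * φ ω := by
  refine hL.induction_on (p := fun L => ∃ (φ : Ω → ℝ) (F : Ω → A) (T : Set Ω),
      Continuous φ ∧ Continuous F ∧ IsCompact T ∧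
      (∀ ω, 0 ≤ φ ω) ∧ (∀ ω, ω ∉ T → φ ω = 0) ∧ (∀ ω, ‖F ω‖ ≤ ‖g‖ * φ ω) ∧
      (∀ ω ∈ L, 1 ≤ φ ω) ∧
      ∀ ω : {ω : Ω // ρ ω = x}, ‖F ω - (φ ω : ℂ) • g ω‖ ≤ ε * φ ω) ?_ ?_ ?_ ?_
  · exact ⟨0, 0, ∅, continuous_zero, continuous_zero, isCompact_empty, by simp, by simp, by simp,
      by simp, by simp⟩
  · rintro s t hst ⟨φ, F, T, h1, h2, h3, h4, h5, h6, h7, h8⟩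
    exact ⟨φ, F, T, h1, h2, h3, h4, h5, h6, fun ω hω => h7 ω (hst hω), h8⟩
  · rintro s t ⟨φ, F, T, h1, h2, h3, h4, h5, h6, h7, h8⟩
      ⟨φ', F', T', h1', h2', h3', h4', h5', h6', h7', h8'⟩
    refine ⟨φ + φ', F + F', T ∪ T', h1.add h1', h2.add h2', h3.union h3',
      fun ω => add_nonneg (h4 ω) (h4' ω), fun ω hω => ?_, fun ω => ?_, ?_, fun ω => ?_⟩
    · rw [Set.mem_union, not_or] at hω
      simp [h5 ω hω.1, h5' ω hω.2]
    · have := norm_add_le (F ω) (F' ω)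
      have a := h6 ω
      have b := h6' ω
      simp only [Pi.add_apply]
      linarith
    · rintro ω (hω | hω)
      · have := h7 ω hω
        have := h4' ω
        simp only [Pi.add_apply]
        linarith
      · have := h7' ω hω
        have := h4 ω
        simp only [Pi.add_apply]
        linarith
    · have e : (F + F') ω - (((φ + φ') ω : ℝ) : ℂ) • g ω =
          (F ω - (φ ω : ℂ) • g ω) + (F' ω - (φ' ω : ℂ) • g ω) := by
        simp only [Pi.add_apply, Complex.ofReal_add, add_smul]
        abel
      rw [e]
      have := norm_add_le (F ω - (φ ω : ℂ) • g ω) (F' ω - (φ' ω : ℂ) • g ω)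
      have a := h8 ω
      have b := h8' ω
      simp only [Pi.add_apply]
      linarith
  · intro ω₀ _
    have hV : {ω | ‖g ω₀ - g ω‖ < ε} ∈ nhds ω₀ := by
      refine IsOpen.mem_nhds (isOpen_lt (by fun_prop) continuous_const) ?_
      simpa using hε
    obtain ⟨U, hU, hUV⟩ := mem_nhds_subtype _ _ _ |>.1 hV
    obtain ⟨U', hU'U, hU'o, hU'm⟩ := mem_nhds_iff.1 hU
    obtain ⟨N, hN, hωN, hNU⟩ := exists_compact_subset hU'o hU'm
    obtain ⟨φ, hφ1, hφ0, hφc, hφr⟩ :=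
      exists_continuous_one_zero_of_isCompact hN hU'o.isClosed_compl
        (Set.disjoint_compl_right_iff_subset.2 hNU)
    refine ⟨Subtype.val ⁻¹' N, mem_nhdsWithin_of_mem_nhds
      (continuous_subtype_val.continuousAt.preimage_mem_nhds (mem_interior_iff_mem_nhds.1 hωN)),
      φ, fun ω => (φ ω : ℂ) • g ω₀, tsupport φ, φ.continuous, ?_, hφc, fun ω => (hφr ω).1,
      fun ω hω => image_eq_zero_of_notMem_tsupport hω, fun ω => ?_,
      fun ω hω => (hφ1 hω).ge, fun ω => ?_⟩
    · fun_prop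
    · rw [norm_smul, Complex.norm_real, Real.norm_of_nonneg (hφr ω).1, mul_comm]
      exact mul_le_mul_of_nonneg_right (g.norm_coe_le_norm _) (hφr ω).1
    · rw [← smul_sub, norm_smul, Complex.norm_real, Real.norm_of_nonneg (hφr ω).1, mul_comm]
      by_cases h : (ω : Ω) ∈ U'
      · exact mul_le_mul_of_nonneg_right (le_of_lt (hUV (hU'U h))) (hφr ω).1
      · have : φ ω = 0 := hφ0 h
        simp [this]

/-! ### Averaging along orbits -/

section Average

variable {H Ω E : Type*} [Group H] [TopologicalSpace H] [DiscreteTopology H]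
  [TopologicalSpace Ω] [NormedAddCommGroup E] {act : Ω → H → Ω}

/-- The average `ω ↦ ∑ h, h • F (ω • h)` of `F` along orbits, for an additive action `p` of `H`
on `E`. It is a finite sum at every point when the action on `Ω` is proper and `F` has compact
support. -/
noncomputable def orbitAvg (act : Ω → H → Ω) (p : H → E →+ E) (F : Ω → E) (ω : Ω) : E :=
  ∑ᶠ h, p h (F (act ω h))

/-- Proper discontinuity. -/
lemma finite_return (hact : IsFreeProperAction act) {N T : Set Ω} (hN : IsCompact N)
    (hT : IsCompact T) : {h | ∃ ω ∈ N, act ω h ∈ T}.Finite := by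
  have hc := hact.proper.isCompact_preimage (hT.prod hN)
  refine (hc.image continuous_snd).finite_of_discrete.subset ?_
  rintro h ⟨ω, hω, hh⟩
  exact ⟨(ω, h), ⟨hh, hω⟩, rfl⟩

lemma finite_return_point (hact : IsFreeProperAction act) {T : Set Ω} (hT : IsCompact T) (ω : Ω) :
    {h | act ω h ∈ T}.Finite :=
  (finite_return hact (isCompact_singleton (x := ω)) hT).subset fun _ hh => ⟨ω, rfl, hh⟩

lemma orbitAvg_eq_sum (hact : IsFreeProperAction act) (p : H → E →+ E) {F : Ω → E} {T : Set Ω}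
    (hT : IsCompact T) (hF : ∀ ω, ω ∉ T → F ω = 0) (ω : Ω) :
    orbitAvg act p F ω = ∑ h ∈ (finite_return_point hact hT ω).toFinset, p h (F (act ω h)) := by
  refine finsum_eq_sum_of_support_subset _ fun h hh => ?_
  simp only [Set.Finite.coe_toFinset, Set.mem_ofPred_eq]
  by_contra hn
  exact hh (by simp [hF _ hn])

lemma continuous_orbitAvg [LocallyCompactSpace Ω] (hact : IsFreeProperAction act) (p : H → E →+ E)
    (hp : ∀ h, Continuous (p h)) {F : Ω → E} {T : Set Ω} (hT : IsCompact T)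
    (hF : ∀ ω, ω ∉ T → F ω = 0) (hFc : Continuous F) : Continuous (orbitAvg act p F) := by
  refine continuous_finsum (fun h => (hp h).comp (hFc.comp
    (hact.continuous.comp (Continuous.prodMk_left h)))) fun ω => ?_
  obtain ⟨N, hN, hωN⟩ := exists_compact_mem_nhds ω
  refine ⟨N, hωN, (finite_return hact hN hT).subset ?_⟩
  rintro h ⟨ω', hs, hω'⟩
  refine ⟨ω', hω', ?_⟩
  by_contra hn
  exact hs (by simp [hF _ hn])

lemma orbitAvg_act (hact : IsFreeProperAction act) (p : H → E →+ E)
    (hp : ∀ h h' a, p (h * h') a = p h (p h' a)) {F : Ω → E} {T : Set Ω} (hT : IsCompact T)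
    (hF : ∀ ω, ω ∉ T → F ω = 0) (ω : Ω) (k : H) :
    orbitAvg act p F (act ω k) = p k⁻¹ (orbitAvg act p F ω) := by
  unfold orbitAvg
  rw [AddMonoidHom.map_finsum]
  · refine Eq.trans (finsum_congr fun h => ?_) (finsum_comp_equiv (Equiv.mulLeft k))
    rw [Equiv.coe_mulLeft, hact.act_mul, ← hp, inv_mul_cancel_left]
  · refine (finite_return_point hact hT ω).subset fun h hs => ?_
    by_contra hn
    exact hs (by simp [hF _ hn])

end Average

/-! ### Restriction to a fibre -/

section Fibre

variable {H Ω X A : Type*} [Group H] [TopologicalSpace H] [DiscreteTopology H]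
  [TopologicalSpace Ω] [NormedAddCommGroup A] [NormedSpace ℂ A]
  {act : Ω → H → Ω} {π : H → A → A}

/-- The action of `H` on the fibre `Ω_x` of an invariant map. -/
def fibreAct (act : Ω → H → Ω) {ρ : Ω → X} (hρinv : ∀ ω (h : H), ρ (act ω h) = ρ ω) (x : X) :
    {ω : Ω // ρ ω = x} → H → {ω : Ω // ρ ω = x} :=
  fun ω h => ⟨act ω.1 h, (hρinv ω.1 h).trans ω.2⟩

omit [TopologicalSpace H] [DiscreteTopology H] [NormedSpace ℂ A] in
lemma fibre_set_eq {ρ : Ω → X} (hρinv : ∀ ω (h : H), ρ (act ω h) = ρ ω) (x : X) :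
    {g : {ω : Ω // ρ ω = x} →ᵇ A |
        (∀ (ω ω' : {ω : Ω // ρ ω = x}) (h : H), (ω' : Ω) = act (ω : Ω) h →
          g ω' = π h⁻¹ (g ω)) ∧
        ∀ ε : ℝ, 0 < ε →
          ∃ K : Set (Quot (fun ω ω' : {ω : Ω // ρ ω = x} => ∃ h : H, act ω.1 h = ω'.1)),
            IsCompact K ∧ ∀ ω : {ω : Ω // ρ ω = x},
              Quot.mk (fun ω ω' : {ω : Ω // ρ ω = x} => ∃ h : H, act ω.1 h = ω'.1) ω ∉ K →
                ‖g ω‖ < ε} = IndSet (fibreAct act hρinv x) π := by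
  have e : (fun ω ω' : {ω : Ω // ρ ω = x} => ∃ h : H, act ω.1 h = ω'.1) =
      orbitRel (fibreAct act hρinv x) := by
    funext ω ω'
    simp only [orbitRel, fibreAct, Subtype.ext_iff]
  rw [e]
  ext g
  refine and_congr_left fun _ => ⟨fun h ω k => h _ _ _ rfl, fun h ω ω' k hk => ?_⟩
  rw [← h ω k]
  exact congrArg g (Subtype.ext hk)

/-- The restriction map to the fibre `Ω_x` on all bounded continuous functions. -/
noncomputable def fibreRestrict (A : Type*) [NormedAddCommGroup A] [NormedSpace ℂ A]
    (ρ : Ω → X) (x : X) : (Ω →ᵇ A) →L[ℂ] ({ω : Ω // ρ ω = x} →ᵇ A) :=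
  LinearMap.mkContinuous
    { toFun := fun ξ => ξ.compContinuous ⟨Subtype.val, continuous_subtype_val⟩
      map_add' := fun _ _ => rfl
      map_smul' := fun _ _ => rfl } 1 (fun ξ => by
        rw [one_mul]
        exact (BoundedContinuousFunction.norm_le (norm_nonneg _)).2 fun ω => ξ.norm_coe_le_norm _)

variable [TopologicalSpace X] [T1Space X] [LocallyCompactSpace Ω]

omit [DiscreteTopology H] [NormedSpace ℂ A] in
lemma mem_indSet_fibre_iff (hact : IsFreeProperAction act) {ρ : Ω → X} (hρ : Continuous ρ)
    (hρinv : ∀ ω (h : H), ρ (act ω h) = ρ ω) (x : X) (g : {ω : Ω // ρ ω = x} →ᵇ A) :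
    g ∈ IndSet (fibreAct act hρinv x) π ↔
      (∀ ω (h : H), g (fibreAct act hρinv x ω h) = π h⁻¹ (g ω)) ∧
      ∀ ε : ℝ, 0 < ε → ∃ L : Set {ω : Ω // ρ ω = x}, IsCompact L ∧
        ∀ ω, (∀ h, fibreAct act hρinv x ω h ∉ L) → ‖g ω‖ < ε := by
  have hcl : IsClosed {ω | ρ ω = x} := isClosed_singleton.preimage hρ
  have : LocallyCompactSpace {ω : Ω // ρ ω = x} :=
    hcl.isClosedEmbedding_subtypeVal.locallyCompactSpace
  refine mem_indSet_iff (fun y => Subtype.ext (hact.act_one _))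
    (fun y h h' => Subtype.ext (hact.act_mul _ _ _)) (fun h => ?_) g
  exact Continuous.subtype_mk (hact.continuous.comp
    ((Continuous.prodMk_left h).comp continuous_subtype_val)) _

omit [DiscreteTopology H] in
lemma fibreRestrict_mem (hact : IsFreeProperAction act) {ρ : Ω → X} (hρ : Continuous ρ)
    (hρinv : ∀ ω (h : H), ρ (act ω h) = ρ ω) (x : X) {ξ : Ω →ᵇ A} (hξ : ξ ∈ IndSet act π) :
    fibreRestrict A ρ x ξ ∈ IndSet (fibreAct act hρinv x) π := by
  rw [mem_indSet_fibre_iff hact hρ]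
  rw [mem_indSet_iff hact.act_one hact.act_mul
    (fun h => hact.continuous.comp (Continuous.prodMk_left h))] at hξ
  refine ⟨fun ω h => hξ.1 _ _, fun ε hε => ?_⟩
  obtain ⟨L, hL, h⟩ := hξ.2 ε hε
  have hcl : IsClosed {ω | ρ ω = x} := isClosed_singleton.preimage hρ
  exact ⟨Subtype.val ⁻¹' L, hcl.isClosedEmbedding_subtypeVal.isCompact_preimage hL,
    fun ω hω => h ω fun k hk => hω k hk⟩

/-- An equivariant function on the fibre that vanishes at infinity is uniformly approximated by
restrictions of elements of `Ind_Ω A` of no larger norm. -/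
lemma exists_approx_lift [T2Space Ω] (hact : IsFreeProperAction act) (hπ : IsIsometricAction π)
    {ρ : Ω → X} (hρ : Continuous ρ) (hρinv : ∀ ω (h : H), ρ (act ω h) = ρ ω) (x : X)
    {g : {ω : Ω // ρ ω = x} →ᵇ A} (hg : g ∈ IndSet (fibreAct act hρinv x) π) {ε : ℝ}
    (hε : 0 < ε) :
    ∃ ξ ∈ IndSet act π, ‖ξ‖ ≤ ‖g‖ ∧ ‖g - fibreRestrict A ρ x ξ‖ ≤ ε + ε := by
  rw [mem_indSet_fibre_iff hact hρ] at hg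
  obtain ⟨L, hL, hLg⟩ := hg.2 ε hε
  obtain ⟨φ, F, T, hφc, hFc, hT, hφ0, hφT, hFφ, hφL, hFg⟩ := exists_local_approx ρ x g hε hL
  have hFT : ∀ ω, ω ∉ T → F ω = 0 := fun ω hω => by
    have := hFφ ω
    rw [hφT ω hω, mul_zero] at this
    exact norm_le_zero_iff.1 this
  let p : H → A →+ A := fun h => ⟨⟨π h, hπ.map_zero h⟩, hπ.map_add h⟩
  let i : H → ℝ →+ ℝ := fun _ => AddMonoidHom.id ℝ
  set EF := orbitAvg act p F with hEF
  set Eφ := orbitAvg act i φ with hEφ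
  have hEFc : Continuous EF := continuous_orbitAvg hact p hπ.continuous hT hFT hFc
  have hEφc : Continuous Eφ := continuous_orbitAvg hact i (fun _ => continuous_id) hT hφT hφc
  have hEFs := orbitAvg_eq_sum hact p hT hFT
  have hEφs := orbitAvg_eq_sum hact i hT hφT
  have hEFe : ∀ ω k, EF (act ω k) = π k⁻¹ (EF ω) := orbitAvg_act hact p hπ.act_mul hT hFT
  have hEφe : ∀ ω k, Eφ (act ω k) = Eφ ω := orbitAvg_act hact i (fun _ _ _ => rfl) hT hφT
  have hEφ0 : ∀ ω, 0 ≤ Eφ ω := fun ω => by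
    rw [hEφ, hEφs]
    exact Finset.sum_nonneg fun h _ => hφ0 _
  have hEb : ∀ ω, ‖EF ω‖ ≤ ‖g‖ * Eφ ω := fun ω => by
    rw [hEF, hEφ, hEφs, hEFs, Finset.mul_sum]
    refine norm_sum_le_of_le _ fun h _ => ?_
    exact (hπ.norm_map _ _).trans_le (hFφ _)
  have hEg : ∀ ω : {ω : Ω // ρ ω = x}, ‖EF ω - (Eφ ω : ℂ) • g ω‖ ≤ ε * Eφ ω := fun ω => by
    rw [hEF, hEφ, hEφs, hEFs, Finset.mul_sum, Complex.ofReal_sum, Finset.sum_smul,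
      ← Finset.sum_sub_distrib]
    refine norm_sum_le_of_le _ fun h _ => ?_
    -- equivariance turns the error at `ω` into the error at `ω • h`
    have e : g ω = π h (g (fibreAct act hρinv x ω h)) := by
      rw [hg.1, ← hπ.act_mul, mul_inv_cancel, hπ.act_one]
    change ‖π h (F (act ω h)) - (φ (act ω h) : ℂ) • g ω‖ ≤ ε * φ (act ω h)
    rw [e, ← hπ.map_smul, ← hπ.map_sub, hπ.norm_map]
    exact hFg (fibreAct act hρinv x ω h)
  have hEL : ∀ (ω : {ω : Ω // ρ ω = x}) h, fibreAct act hρinv x ω h ∈ L → 1 ≤ Eφ ω := by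
    intro ω h hh
    rw [← hEφe ω h, hEφ, hEφs]
    have h1 : 1 ≤ φ (act ω h) := hφL _ hh
    have hmem : act ω h ∈ T := by
      by_contra hn
      rw [hφT _ hn] at h1
      norm_num at h1
    have hone : (1 : H) ∈ (finite_return_point hact hT (act ω h)).toFinset := by
      simpa [hact.act_one] using hmem
    refine h1.trans ?_
    have := Finset.single_le_sum (f := fun k => i k (φ (act (act ω h) k)))
      (fun k _ => hφ0 _) hone
    simpa [hact.act_one, i] using this
  let c : Ω → ℝ := fun ω => max 1 (Eφ ω)
  have hcpos : ∀ ω, 0 < c ω := fun ω => lt_of_lt_of_le one_pos (le_max_left _ _)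
  have hcc : Continuous fun ω => (((c ω)⁻¹ : ℝ) : ℂ) :=
    Complex.continuous_ofReal.comp ((continuous_const.max hEφc).inv₀ fun ω => (hcpos ω).ne')
  have hcn : ∀ ω, ‖(((c ω)⁻¹ : ℝ) : ℂ)‖ = (c ω)⁻¹ := fun ω => by
    rw [Complex.norm_real, Real.norm_of_nonneg (inv_nonneg.2 (hcpos ω).le)]
  have hcE : ∀ ω, (c ω)⁻¹ * Eφ ω ≤ 1 := fun ω => by
    rw [inv_mul_le_iff₀ (hcpos ω), mul_one]
    exact le_max_right _ _
  have hb : ∀ ω, ‖(((c ω)⁻¹ : ℝ) : ℂ) • EF ω‖ ≤ ‖g‖ := fun ω => by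
    rw [norm_smul, hcn]
    calc (c ω)⁻¹ * ‖EF ω‖ ≤ (c ω)⁻¹ * (‖g‖ * Eφ ω) :=
          mul_le_mul_of_nonneg_left (hEb ω) (inv_nonneg.2 (hcpos ω).le)
      _ = ‖g‖ * ((c ω)⁻¹ * Eφ ω) := by ring
      _ ≤ ‖g‖ := mul_le_of_le_one_right (norm_nonneg _) (hcE ω)
  let ξ : Ω →ᵇ A := BoundedContinuousFunction.ofNormedAddCommGroup
    (fun ω => (((c ω)⁻¹ : ℝ) : ℂ) • EF ω) (hcc.smul hEFc) ‖g‖ hb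
  have hξ : ∀ ω, ξ ω = (((c ω)⁻¹ : ℝ) : ℂ) • EF ω := fun _ => rfl
  refine ⟨ξ, ?_, BoundedContinuousFunction.norm_ofNormedAddCommGroup_le _ (norm_nonneg _) hb, ?_⟩
  · rw [mem_indSet_iff hact.act_one hact.act_mul
      (fun h => hact.continuous.comp (Continuous.prodMk_left h))]
    refine ⟨fun ω h => ?_, fun δ hδ => ⟨T, hT, fun ω hω => ?_⟩⟩
    · have : c (act ω h) = c ω := by simp only [c, hEφe]
      rw [hξ, hξ, this, hEFe, hπ.map_smul]
    · have : EF ω = 0 := by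
        rw [hEF, hEFs]
        exact Finset.sum_eq_zero fun h _ => by rw [hFT _ (hω h), _root_.map_zero]
      rw [hξ, this, smul_zero, norm_zero]
      exact hδ
  · refine (BoundedContinuousFunction.norm_le (by positivity)).2 fun ω => ?_
    have e : (g - fibreRestrict A ρ x ξ) ω =
        ((1 - (c ω)⁻¹ * Eφ ω : ℝ) : ℂ) • g ω -
          (((c ω)⁻¹ : ℝ) : ℂ) • (EF ω - (Eφ ω : ℂ) • g ω) := by
      change g ω - (((c ω)⁻¹ : ℝ) : ℂ) • EF ω = _
      push_cast
      module
    rw [e]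
    refine (norm_sub_le _ _).trans (add_le_add ?_ ?_)
    · rw [norm_smul, Complex.norm_real, Real.norm_of_nonneg (sub_nonneg.2 (hcE ω))]
      by_cases hω : ∃ h, fibreAct act hρinv x ω h ∈ L
      · obtain ⟨h, hh⟩ := hω
        have h1 := hEL ω h hh
        have : c ω = Eφ ω := max_eq_right h1
        rw [this, inv_mul_cancel₀ (by linarith), sub_self, zero_mul]
        exact hε.le
      · push Not at hω
        refine (mul_le_of_le_one_left (norm_nonneg _) ?_).trans (hLg ω hω).le
        have := mul_nonneg (inv_nonneg.2 (hcpos ω).le) (hEφ0 ω)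
        linarith
    · rw [norm_smul, hcn]
      calc (c ω)⁻¹ * _ ≤ (c ω)⁻¹ * (ε * Eφ ω) :=
            mul_le_mul_of_nonneg_left (hEg ω) (inv_nonneg.2 (hcpos ω).le)
        _ = ε * ((c ω)⁻¹ * Eφ ω) := by ring
        _ ≤ ε := mul_le_of_le_one_right hε.le (hcE ω)

omit [DiscreteTopology H] in
/-- An element of `Ind_Ω A` vanishing on `Ω_x` is approximated by its multiples by functions
on `X` that vanish at `x`. -/
lemma exists_kernel_approx [T2Space X] [LocallyCompactSpace X] (hact : IsFreeProperAction act)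
    (hπ : IsIsometricAction π)
    {ρ : Ω → X} (hρ : Continuous ρ) (hρinv : ∀ ω (h : H), ρ (act ω h) = ρ ω) (x : X)
    {ξ : Ω →ᵇ A} (hξ : ξ ∈ IndSet act π) (hξx : ∀ ω, ρ ω = x → ξ ω = 0) {ε : ℝ} (hε : 0 < ε) :
    ∃ (δ : C₀(X, ℂ)) (ζ : Ω →ᵇ A), δ x = 0 ∧ (∀ ω, ζ ω = δ (ρ ω) • ξ ω) ∧ ‖ξ - ζ‖ ≤ ε := by
  obtain ⟨L, hL, hLξ⟩ := ((mem_indSet_iff hact.act_one hact.act_mul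
    (fun h => hact.continuous.comp (Continuous.prodMk_left h)) ξ).1 hξ).2 ε hε
  have hL' : IsCompact (L ∩ {ω | ε ≤ ‖ξ ω‖}) :=
    hL.inter_right (isClosed_le continuous_const (by fun_prop))
  have hdisj : Disjoint (ρ '' (L ∩ {ω | ε ≤ ‖ξ ω‖})) {x} := by
    rw [Set.disjoint_singleton_right]
    rintro ⟨ω, ⟨-, hω⟩, hωx⟩
    rw [Set.mem_ofPred_eq, hξx ω hωx, norm_zero] at hω
    linarith
  obtain ⟨d, hd1, hd0, hdc, hdr⟩ :=
    exists_continuous_one_zero_of_isCompact (hL'.image hρ) (isClosed_singleton (x := x)) hdisj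
  let δ : C₀(X, ℂ) := ⟨⟨fun y => (d y : ℂ), by fun_prop⟩, by
    have hs : HasCompactSupport fun y => (d y : ℂ) :=
      hdc.comp_left (g := fun r : ℝ => (r : ℂ)) Complex.ofReal_zero
    exact hs.is_zero_at_infty⟩
  have hδ : ∀ y, δ y = (d y : ℂ) := fun _ => rfl
  have hδ1 : ∀ y, ‖δ y‖ ≤ 1 := fun y => by
    rw [hδ, Complex.norm_real, Real.norm_of_nonneg (hdr y).1]
    exact (hdr y).2
  let ζ : Ω →ᵇ A := BoundedContinuousFunction.ofNormedAddCommGroup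
    (fun ω => δ (ρ ω) • ξ ω) (by
      have := δ.continuous
      fun_prop) ‖ξ‖ (fun ω => by
      rw [norm_smul]
      exact (mul_le_of_le_one_left (norm_nonneg _) (hδ1 _)).trans (ξ.norm_coe_le_norm ω))
  refine ⟨δ, ζ, ?_, fun _ => rfl, (BoundedContinuousFunction.norm_le hε.le).2 fun ω => ?_⟩
  · rw [hδ, hd0 (Set.mem_singleton x)]
    simp
  · have e : (ξ - ζ) ω = ((1 - d (ρ ω) : ℝ) : ℂ) • ξ ω := by
      change ξ ω - (d (ρ ω) : ℂ) • ξ ω = _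
      push_cast
      module
    rw [e, norm_smul, Complex.norm_real, Real.norm_of_nonneg (sub_nonneg.2 (hdr _).2)]
    by_cases hω : ‖ξ ω‖ < ε
    · refine (mul_le_of_le_one_left (norm_nonneg _) ?_).trans hω.le
      linarith [(hdr (ρ ω)).1]
    · have : ∃ h, act ω h ∈ L := by
        by_contra hn
        exact hω (hLξ ω (not_exists.1 hn))
      obtain ⟨h, hh⟩ := this
      have h1 : d (ρ ω) = 1 := by
        rw [← hρinv ω h]
        refine hd1 ⟨_, ⟨hh, ?_⟩, rfl⟩
        rw [Set.mem_ofPred_eq, indSet_norm_act hπ hξ]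
        exact not_lt.1 hω
      rw [h1, sub_self, zero_mul]
      exact hε.le

end Fibre

/-- **Fibres of the induced space over `X`.**  Fix `x ∈ X` and let `Ω_x = ρ⁻¹(x)`.
Consider the restriction map `R : Ind_Ω A → C_b(Ω_x, A)`.  Then:
(i) the kernel of `R` is the closed linear span of the functions `ω ↦ δ(ρ ω) ξ(ω)` with
`δ ∈ C₀(X)`, `δ(x) = 0` and `ξ ∈ Ind_Ω A`;
(ii) the image of `R` is exactly the set of bounded continuous `H`-equivariant functions on
`Ω_x` whose norm function vanishes at infinity relative to `Ω_x/H`. -/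
theorem indSet_restriction_fibre
    {H : Type*} [Group H] [TopologicalSpace H] [DiscreteTopology H]
    {Ω : Type*} [TopologicalSpace Ω] [LocallyCompactSpace Ω] [T2Space Ω]
    {A : Type*} [NormedAddCommGroup A] [NormedSpace ℂ A] [CompleteSpace A]
    (act : Ω → H → Ω) (hact : IsFreeProperAction act)
    (π : H → A → A) (hπ : IsIsometricAction π)
    {X : Type*} [TopologicalSpace X] [LocallyCompactSpace X] [T2Space X]
    (ρ : Ω → X) (hρ : Continuous ρ) (hρinv : ∀ ω (h : H), ρ (act ω h) = ρ ω)
    (x : X) :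
    ({ξ : Ω →ᵇ A | ξ ∈ IndSet act π ∧ ∀ ω, ρ ω = x → ξ ω = 0} =
      closure (Submodule.span ℂ
        {ζ : Ω →ᵇ A | ∃ δ : C₀(X, ℂ), δ x = 0 ∧
          ∃ ξ ∈ IndSet act π, ∀ ω, ζ ω = δ (ρ ω) • ξ ω} : Set (Ω →ᵇ A))) ∧
    ({g : {ω : Ω // ρ ω = x} →ᵇ A | ∃ ξ ∈ IndSet act π,
        g = ξ.compContinuous ⟨Subtype.val, continuous_subtype_val⟩} =
      {g : {ω : Ω // ρ ω = x} →ᵇ A |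
        (∀ (ω ω' : {ω : Ω // ρ ω = x}) (h : H), (ω' : Ω) = act (ω : Ω) h →
          g ω' = π h⁻¹ (g ω)) ∧
        ∀ ε : ℝ, 0 < ε →
          ∃ K : Set (Quot (fun ω ω' : {ω : Ω // ρ ω = x} => ∃ h : H, act ω.1 h = ω'.1)),
            IsCompact K ∧ ∀ ω : {ω : Ω // ρ ω = x},
              Quot.mk (fun ω ω' : {ω : Ω // ρ ω = x} => ∃ h : H, act ω.1 h = ω'.1) ω ∉ K →
                ‖g ω‖ < ε}) := by
  constructor
  · apply Set.Subset.antisymm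
    · rintro ξ ⟨hξ, hξx⟩
      refine Metric.mem_closure_iff.2 fun ε hε => ?_
      obtain ⟨δ, ζ, hδ, hζ, hn⟩ :=
        exists_kernel_approx hact hπ hρ hρinv x hξ hξx (half_pos hε)
      refine ⟨ζ, Submodule.subset_span ⟨δ, hδ, ξ, hξ, hζ⟩, ?_⟩
      rw [dist_eq_norm]
      linarith
    · let N : Submodule ℂ (Ω →ᵇ A) := indSubmodule act hπ ⊓ (fibreRestrict A ρ x).ker
      have hN : {ξ : Ω →ᵇ A | ξ ∈ IndSet act π ∧ ∀ ω, ρ ω = x → ξ ω = 0} = N := by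
        ext ξ
        refine and_congr_right fun _ => ⟨fun h => ?_, fun h ω hω => ?_⟩
        · exact BoundedContinuousFunction.ext fun ω => h ω.1 ω.2
        · exact DFunLike.congr_fun (show fibreRestrict A ρ x ξ = 0 from h) ⟨ω, hω⟩
      rw [hN]
      refine closure_minimal (Submodule.span_le.2 ?_)
        ((isClosed_indSet act hπ).inter (fibreRestrict A ρ x).isClosed_ker)
      rw [← hN]
      rintro ζ ⟨δ, hδ, ξ, hξ, hζ⟩
      refine ⟨indSet_of_smul hπ hξ (fun ω => δ (ρ ω)) ‖δ.toBCF‖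
        (fun ω => δ.toBCF.norm_coe_le_norm _) (fun ω h => by rw [hρinv]) hζ, fun ω hω => ?_⟩
      rw [hζ, hω, hδ, zero_smul]
  · rw [fibre_set_eq hρinv x]
    apply Set.Subset.antisymm
    · rintro g ⟨ξ, hξ, rfl⟩
      exact fibreRestrict_mem hact hρ hρinv x hξ
    · intro g hg
      obtain ⟨ξ, hξ, h⟩ := exists_preimage_of_approx (fibreRestrict A ρ x) (indSubmodule act hπ)
        (isClosed_indSet act hπ) (IndSet (fibreAct act hρinv x) π) (fun g hg => by
          by_cases h0 : g = 0
          · subst h0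
            exact ⟨0, Submodule.zero_mem _, by simp, by simpa using hg, by simp⟩
          · obtain ⟨ξ, hξ, h1, h2⟩ := exists_approx_lift hact hπ hρ hρinv x hg
              (ε := ‖g‖ / 4) (by have := norm_pos_iff.2 h0; positivity)
            exact ⟨ξ, hξ, h1, (indSubmodule (fibreAct act hρinv x) hπ).sub_mem hg
              (fibreRestrict_mem hact hρ hρinv x hξ), by linarith⟩) g hg
      exact ⟨ξ, hξ, h.symm⟩
end
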